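/- arXiv:1508.03081 — 3 statements merged into one kernel-verified Lean document; each statement's English description precedes it below -/
import Mathlib

section
/- There exists an infinitely differentiable function g : ℝ → ℝ such that g(r) = 1/3 for all r ∈ [0, 1/10], g(r) = cosh(r) for all r ∈ [9/10, 1], g is monotone nondecreasing on [0,1], g(r) > 0 for all r ∈ [0,1], and ∫_0^1 g(r) dr = sinh(1). -/
lemma aux_mono (φ : ℝ → ℝ) (a w : ℝ) (hw : 0 < w)
    (hm : MonotoneOn φ (Set.Icc (0:ℝ) 1)) (hp : ∀ r ∈ Set.Icc (0:ℝ) 1, 1/3 ≤ φ r) :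
    MonotoneOn (fun r => 1/3 + (φ r - 1/3) * Real.smoothTransition ((r - a) / w))
      (Set.Icc (0:ℝ) 1) := by
  intro x hx y hy hxy
  have h1 := hm hx hy hxy
  have h2 : Real.smoothTransition ((x - a) / w) ≤ Real.smoothTransition ((y - a) / w) :=
    Real.smoothTransition.monotone (by gcongr)
  have h3 := Real.smoothTransition.nonneg ((x - a) / w)
  have h4 := hp y hy
  have : (φ x - 1/3) * Real.smoothTransition ((x - a) / w)
      ≤ (φ y - 1/3) * Real.smoothTransition ((y - a) / w) :=
    mul_le_mul (by linarith) h2 h3 (by linarith)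
  simpa using this

lemma aux_phi_mono :
    Monotone (fun r : ℝ => 4/5 + (r - 4/5) * Real.smoothTransition ((r - 4/5) / (1/10))) := by
  intro x y hxy
  have h2 : Real.smoothTransition ((x - 4/5) / (1/10)) ≤
      Real.smoothTransition ((y - 4/5) / (1/10)) :=
    Real.smoothTransition.monotone (by gcongr)
  have h3 := Real.smoothTransition.nonneg ((x - 4/5) / (1/10))
  have h5 := Real.smoothTransition.nonneg ((y - 4/5) / (1/10))
  have : (x - 4/5) * Real.smoothTransition ((x - 4/5) / (1/10))
      ≤ (y - 4/5) * Real.smoothTransition ((y - 4/5) / (1/10)) := by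
    rcases le_total y (4/5) with h | h
    · rw [Real.smoothTransition.zero_of_nonpos (x := (x - 4/5) / (1/10)) (by linarith),
        Real.smoothTransition.zero_of_nonpos (x := (y - 4/5) / (1/10)) (by linarith)]
      simp
    · exact mul_le_mul (by linarith) h2 h3 (by linarith)
  simpa using this

lemma aux_phi_ge (r : ℝ) :
    4/5 ≤ 4/5 + (r - 4/5) * Real.smoothTransition ((r - 4/5) / (1/10)) := by
  rcases le_total r (4/5) with h | h
  · rw [Real.smoothTransition.zero_of_nonpos (x := (r - 4/5) / (1/10)) (by linarith)]
    simp
  · have := mul_nonneg (sub_nonneg.2 h) (Real.smoothTransition.nonneg ((r - 4/5) / (1/10)))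
    linarith

lemma aux_sinh : Real.sinh (9/10) ≤ 1.04 := by
  have h1 : Real.exp (9/10) * Real.exp (1/10) = Real.exp 1 := by
    rw [← Real.exp_add]; norm_num
  have h2 := Real.exp_one_lt_d9
  have h3 := Real.quadratic_le_exp_of_nonneg (x := 1/10) (by norm_num)
  have h4 := Real.exp_pos (9/10)
  have h5 : Real.exp (9/10) ≤ 2.47 := by
    norm_num at h2 h3 ⊢
    nlinarith
  have h6 : Real.exp (9/10) * Real.exp (-(9/10)) = 1 := by
    rw [← Real.exp_add]; norm_num
  have h7 : 0.4 ≤ Real.exp (-(9/10)) := by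
    have := Real.exp_pos (-(9/10))
    norm_num at h5 ⊢
    nlinarith
  have h8 : 0.404 ≤ Real.exp (-(9/10)) := by
    have := Real.exp_pos (-(9/10))
    norm_num at h5 ⊢
    nlinarith
  rw [Real.sinh_eq]
  norm_num at *
  linarith

lemma aux_cosh : 1.32 ≤ Real.cosh (4/5) := by
  have h3 := Real.quadratic_le_exp_of_nonneg (x := 4/5) (by norm_num)
  have h := Real.cosh_sq (4/5)
  have h1 : 4/5 ≤ Real.sinh (4/5) := Real.self_le_sinh_iff.2 (by norm_num)
  have h2 : Real.cosh (4/5) = 1 + 2 * Real.sinh (2/5) ^ 2 := by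
    have := Real.cosh_two_mul (2/5)
    have h' := Real.cosh_sq (2/5)
    rw [show (4/5:ℝ) = 2 * (2/5) by norm_num]
    linarith
  have h4 : 2/5 ≤ Real.sinh (2/5) := Real.self_le_sinh_iff.2 (by norm_num)
  rw [h2]
  norm_num
  nlinarith

lemma aux_cosh_mono : MonotoneOn Real.cosh (Set.Ici 0) := by
  intro x hx y hy hxy
  rw [Real.cosh_le_cosh, abs_of_nonneg hx, abs_of_nonneg hy]
  exact hxy

lemma aux_int_cosh (a b : ℝ) : ∫ r in a..b, Real.cosh r = Real.sinh b - Real.sinh a :=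
  intervalIntegral.integral_eq_sub_of_hasDerivAt (fun x _ => Real.hasDerivAt_sinh x)
    (Real.continuous_cosh.intervalIntegrable _ _)

def AuxP (g : ℝ → ℝ) : Prop :=
  ContDiff ℝ (⊤ : ℕ∞) g ∧
      (∀ r ∈ Set.Icc (0:ℝ) (1/10), g r = 1/3) ∧
      (∀ r ∈ Set.Icc (9/10 : ℝ) 1, g r = Real.cosh r) ∧
      MonotoneOn g (Set.Icc (0:ℝ) 1)

lemma aux_lo : ∃ g, AuxP g ∧ (∫ r in (0:ℝ)..1, g r) ≤ Real.sinh 1 := by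
  have hc : ContDiff ℝ (⊤ : ℕ∞) (fun r : ℝ =>
      1/3 + (Real.cosh r - 1/3) * Real.smoothTransition ((r - 1/2) / (2/5))) := by
    have := Real.smoothTransition.contDiff (n := ⊤)
    have h2 : ContDiff ℝ (⊤ : ℕ∞) Real.cosh := Real.contDiff_cosh
    fun_prop
  refine ⟨fun r => 1/3 + (Real.cosh r - 1/3) * Real.smoothTransition ((r - 1/2) / (2/5)),
    ⟨hc, ?_, ?_, ?_⟩, ?_⟩
  · intro r hr
    have := hr.2
    simp only
    rw [Real.smoothTransition.zero_of_nonpos (by linarith)]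
    ring
  · intro r hr
    have := hr.1
    simp only
    rw [Real.smoothTransition.one_of_one_le (by linarith)]
    ring
  · apply aux_mono _ _ _ (by norm_num) (aux_cosh_mono.mono Set.Icc_subset_Ici_self)
    intro r _
    have := Real.one_le_cosh r
    linarith
  · have hi := fun a b => hc.continuous.intervalIntegrable (μ := MeasureTheory.volume) a b
    rw [← intervalIntegral.integral_add_adjacent_intervals (hi 0 (1/2)) (hi (1/2) 1)]
    have e1 := intervalIntegral.integral_mono_on (by norm_num) (hi 0 (1/2))
      (intervalIntegrable_const (c := (1/3 : ℝ))) (fun r hr => by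
        have := hr.2
        rw [Real.smoothTransition.zero_of_nonpos (by linarith)]
        simp)
    have e2 := intervalIntegral.integral_mono_on (by norm_num) (hi (1/2) 1)
      (Real.continuous_cosh.intervalIntegrable _ _) (fun r hr => by
        have h1 := Real.smoothTransition.le_one ((r - 1/2) / (2/5))
        have := Real.one_le_cosh r
        nlinarith)
    rw [aux_int_cosh] at e2
    rw [intervalIntegral.integral_const, smul_eq_mul] at e1
    have : 1/2 ≤ Real.sinh (1/2) := Real.self_le_sinh_iff.2 (by norm_num)
    linarith

lemma aux_hi : ∃ g, AuxP g ∧ Real.sinh 1 ≤ (∫ r in (0:ℝ)..1, g r) := by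
  obtain ⟨φ, hφ⟩ : ∃ φ : ℝ → ℝ, φ = fun r : ℝ =>
    4/5 + (r - 4/5) * Real.smoothTransition ((r - 4/5) / (1/10)) := ⟨_, rfl⟩
  have hm : Monotone φ := hφ ▸ aux_phi_mono
  have hg : ∀ r, 4/5 ≤ φ r := fun r => by rw [hφ]; exact aux_phi_ge r
  have hr9 : ∀ r, 9/10 ≤ r → φ r = r := fun r hr => by
    rw [hφ]; simp only
    rw [Real.smoothTransition.one_of_one_le (by linarith)]
    ring
  have hS := Real.smoothTransition.contDiff (n := ⊤)
  have hφc : ContDiff ℝ (⊤ : ℕ∞) φ := by rw [hφ]; fun_prop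
  have h13 : ∀ r, 1.32 ≤ Real.cosh (φ r) := fun r =>
    aux_cosh.trans (aux_cosh_mono (by norm_num : (0:ℝ) ≤ 4/5)
      (by have := hg r; simp only [Set.mem_Ici]; linarith) (hg r))
  have hc : ContDiff ℝ (⊤ : ℕ∞) (fun r : ℝ =>
      1/3 + (Real.cosh (φ r) - 1/3) * Real.smoothTransition ((r - 1/10) / (1/20))) := by
    have h2 : ContDiff ℝ (⊤ : ℕ∞) Real.cosh := Real.contDiff_cosh
    fun_prop
  refine ⟨fun r => 1/3 + (Real.cosh (φ r) - 1/3) * Real.smoothTransition ((r - 1/10) / (1/20)),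
    ⟨hc, ?_, ?_, ?_⟩, ?_⟩
  · intro r hr
    have := hr.2
    simp only
    rw [Real.smoothTransition.zero_of_nonpos (by linarith)]
    ring
  · intro r hr
    have := hr.1
    simp only
    rw [Real.smoothTransition.one_of_one_le (by linarith), hr9 r this]
    ring
  · apply aux_mono (fun r => Real.cosh (φ r)) _ _ (by norm_num)
    · intro x _ y _ hxy
      have h1 := hg x
      have h2 := hg y
      exact aux_cosh_mono (by simp only [Set.mem_Ici]; linarith)
        (by simp only [Set.mem_Ici]; linarith) (hm hxy)
    · intro r _
      have := Real.one_le_cosh (φ r)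
      linarith
  · have hi := fun a b => hc.continuous.intervalIntegrable (μ := MeasureTheory.volume) a b
    rw [← intervalIntegral.integral_add_adjacent_intervals (hi 0 (3/20)) (hi (3/20) 1),
      ← intervalIntegral.integral_add_adjacent_intervals (hi (3/20) (9/10)) (hi (9/10) 1)]
    have e1 := intervalIntegral.integral_mono_on (by norm_num)
      (intervalIntegrable_const (c := (1/3 : ℝ))) (hi 0 (3/20)) (fun r hr => by
        have := mul_nonneg (sub_nonneg.2 ((by norm_num : (1/3:ℝ) ≤ 1.32).trans (h13 r)))
          (Real.smoothTransition.nonneg ((r - 1/10) / (1/20)))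
        linarith)
    have e2 := intervalIntegral.integral_mono_on (by norm_num)
      (intervalIntegrable_const (c := (1.32 : ℝ))) (hi (3/20) (9/10)) (fun r hr => by
        have := hr.1
        have := h13 r
        rw [Real.smoothTransition.one_of_one_le (by linarith)]
        linarith)
    have e3 := intervalIntegral.integral_mono_on (by norm_num)
      (Real.continuous_cosh.intervalIntegrable _ _) (hi (9/10) 1) (fun r hr => by
        have := hr.1
        rw [Real.smoothTransition.one_of_one_le (by linarith), hr9 r this]
        linarith)
    rw [aux_int_cosh] at e3
    rw [intervalIntegral.integral_const, smul_eq_mul] at e1 e2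
    have := aux_sinh
    norm_num at *
    linarith

/-- Existence of the smooth function `f'` used in the warping construction:
equal to `1/3` on `[0, 1/10]`, equal to `cosh` on `[9/10, 1]`, monotone
nondecreasing and positive on `[0,1]`, with integral `sinh 1` over `[0,1]`. -/
theorem exists_smooth_interpolant :
    ∃ g : ℝ → ℝ, ContDiff ℝ (⊤ : ℕ∞) g ∧
      (∀ r ∈ Set.Icc (0:ℝ) (1/10), g r = 1/3) ∧
      (∀ r ∈ Set.Icc (9/10 : ℝ) 1, g r = Real.cosh r) ∧
      MonotoneOn g (Set.Icc (0:ℝ) 1) ∧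
      (∀ r ∈ Set.Icc (0:ℝ) 1, 0 < g r) ∧
      (∫ r in (0:ℝ)..1, g r) = Real.sinh 1 := by
  obtain ⟨u, ⟨u1, u2, u3, u4⟩, u5⟩ := aux_lo
  obtain ⟨v, ⟨v1, v2, v3, v4⟩, v5⟩ := aux_hi
  have hs : Real.sinh 1 ∈ segment ℝ (∫ r in (0:ℝ)..1, u r) (∫ r in (0:ℝ)..1, v r) := by
    rw [segment_eq_Icc (u5.trans v5)]
    exact ⟨u5, v5⟩
  obtain ⟨a, b, ha, hb, hab, h⟩ := hs
  have hmono : MonotoneOn (fun r => a * u r + b * v r) (Set.Icc (0:ℝ) 1) := by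
    intro x hx y hy hxy
    have h1 := u4 hx hy hxy
    have h2 := v4 hx hy hxy
    simp only
    gcongr
  have h0 : ∀ r ∈ Set.Icc (0:ℝ) (1/10), a * u r + b * v r = 1/3 := by
    intro r hr
    rw [u2 r hr, v2 r hr, ← add_mul, hab, one_mul]
  refine ⟨fun r => a * u r + b * v r, by fun_prop, h0, ?_, hmono, ?_, ?_⟩
  · intro r hr
    simp only
    rw [u3 r hr, v3 r hr, ← add_mul, hab, one_mul]
  · intro r hr
    have h1 := hmono (by simp : (0:ℝ) ∈ Set.Icc (0:ℝ) 1) hr hr.1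
    have h2 := h0 0 (by norm_num)
    simp only at h1 ⊢
    linarith
  · rw [intervalIntegral.integral_add
      ((u1.continuous.intervalIntegrable _ _).const_mul a)
      ((v1.continuous.intervalIntegrable _ _).const_mul b),
      intervalIntegral.integral_const_mul, intervalIntegral.integral_const_mul]
    simpa using h
end

section
/- There exists an infinitely differentiable function f : ℝ → ℝ such that f(r) = r/3 for all r ∈ [0, 1/10], f(r) = sinh(r) for all r ≥ 1, the derivative f′(r) is strictly positive for all r ≥ 0, and the second derivative f″(r) is nonnegative for all r ≥ 0. In particular f(0) = 0. -/
/-- The interpolated argument: equal to `9/10` before `9/10` and to `r` after `1`. -/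
noncomputable def warpArg (r : ℝ) : ℝ :=
  9/10 + max 0 (r - 9/10) * Real.smoothTransition (10 * r - 9)

theorem warpArg_eq (r : ℝ) :
    warpArg r = 9/10 + (r - 9/10) * Real.smoothTransition (10 * r - 9) := by
  unfold warpArg
  rcases le_total r (9/10) with h | h
  · rw [Real.smoothTransition.zero_of_nonpos (by linarith)]; simp
  · rw [max_eq_right (by linarith)]

theorem warpArg_mono : Monotone warpArg := by
  intro a b hab
  unfold warpArg
  have h1 : max 0 (a - 9/10) ≤ max 0 (b - 9/10) := max_le_max le_rfl (by linarith)
  have h2 := Real.smoothTransition.monotone (show 10 * a - 9 ≤ 10 * b - 9 by linarith)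
  have := mul_le_mul h1 h2 (Real.smoothTransition.nonneg _) (le_max_left _ _)
  linarith

theorem warpArg_ge (r : ℝ) : 9/10 ≤ warpArg r := by
  unfold warpArg
  have := mul_nonneg (le_max_left 0 (r - 9/10)) (Real.smoothTransition.nonneg (10 * r - 9))
  linarith

theorem warpArg_of_one_le {r : ℝ} (h : 1 ≤ r) : warpArg r = r := by
  rw [warpArg_eq, Real.smoothTransition.one_of_one_le (by linarith)]; ring

/-- Model derivative, with a step from `a` to `a + 1/c`. -/
noncomputable def warpDer (c a r : ℝ) : ℝ :=
  1/3 + (Real.cosh (warpArg r) - 1/3) * Real.smoothTransition (c * (r - a))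

theorem cosh_warpArg_ge (r : ℝ) : 1.4 ≤ Real.cosh (warpArg r) := by
  have h1 : (1.4:ℝ) ≤ Real.cosh (9/10) := by
    have e : (9/10 : ℝ) = 2 * (9/20) := by norm_num
    have h : (9/20 : ℝ) < Real.sinh (9/20) := Real.self_lt_sinh_iff.2 (by norm_num)
    rw [e, Real.cosh_two_mul, Real.cosh_sq]
    norm_num only
    nlinarith
  have h2 : Real.cosh (9/10) ≤ Real.cosh (warpArg r) := by
    rw [Real.cosh_le_cosh, abs_of_nonneg (by norm_num), abs_of_nonneg (by linarith [warpArg_ge r])]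
    exact warpArg_ge r
  linarith

theorem warpDer_mono {c : ℝ} (hc : 0 ≤ c) (a : ℝ) : Monotone (warpDer c a) := by
  intro x y hxy
  unfold warpDer
  have h1 : Real.cosh (warpArg x) ≤ Real.cosh (warpArg y) := by
    rw [Real.cosh_le_cosh, abs_of_nonneg (by linarith [warpArg_ge x]),
      abs_of_nonneg (by linarith [warpArg_ge y])]
    exact warpArg_mono hxy
  have h2 := Real.smoothTransition.monotone
    (mul_le_mul_of_nonneg_left (show x - a ≤ y - a by linarith) hc)
  have := mul_le_mul (sub_le_sub_right h1 (1/3)) h2 (Real.smoothTransition.nonneg _)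
    (by linarith [cosh_warpArg_ge y])
  linarith

theorem warpDer_contDiff (c a : ℝ) : ContDiff ℝ (⊤ : ℕ∞) (warpDer c a) := by
  have h : ContDiff ℝ (⊤ : ℕ∞) warpArg := by
    rw [show warpArg = _ from funext warpArg_eq]
    exact contDiff_const.add ((contDiff_id.sub contDiff_const).mul
      (Real.smoothTransition.contDiff.comp ((contDiff_const.mul contDiff_id).sub contDiff_const)))
  exact contDiff_const.add ((h.cosh.sub contDiff_const).mul
    (Real.smoothTransition.contDiff.comp (contDiff_const.mul (contDiff_id.sub contDiff_const))))

theorem warpDer_left {c a r : ℝ} (hc : 0 ≤ c) (h : r ≤ a) : warpDer c a r = 1/3 := by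
  unfold warpDer
  rw [Real.smoothTransition.zero_of_nonpos (mul_nonpos_of_nonneg_of_nonpos hc (by linarith))]
  ring

theorem warpDer_right {c a r : ℝ} (h : 1 ≤ c * (r - a)) :
    warpDer c a r = Real.cosh (warpArg r) := by
  unfold warpDer
  rw [Real.smoothTransition.one_of_one_le h]
  ring

theorem warpDer_ge (c a r : ℝ) : 1/3 ≤ warpDer c a r := by
  unfold warpDer
  have := mul_nonneg (show 0 ≤ Real.cosh (warpArg r) - 1/3 by linarith [cosh_warpArg_ge r])
    (Real.smoothTransition.nonneg (c * (r - a)))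
  linarith

theorem warp_ii (c a x y : ℝ) : IntervalIntegrable (warpDer c a) MeasureTheory.volume x y :=
  (warpDer_contDiff c a).continuous.intervalIntegrable _ _

theorem warp_low : ∫ r in (0:ℝ)..1, warpDer 10 (9/10) r ≤ 1 := by
  rw [← intervalIntegral.integral_add_adjacent_intervals (warp_ii _ _ 0 (9/10)) (warp_ii _ _ _ 1)]
  have h1 := intervalIntegral.integral_mono_on (a := 0) (b := 9/10) (by norm_num)
    (warp_ii 10 (9/10) 0 (9/10)) (intervalIntegrable_const (c := (1/3:ℝ)))
    (fun x hx => (warpDer_left (by norm_num) hx.2).le)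
  have h2 := intervalIntegral.integral_mono_on (a := 9/10) (b := 1) (by norm_num)
    (warp_ii 10 (9/10) (9/10) 1) (intervalIntegrable_const (c := Real.cosh 1))
    (fun x hx => by
      have := warpDer_mono (c := 10) (by norm_num) (9/10) hx.2
      rwa [warpDer_right (r := 1) (by norm_num), warpArg_of_one_le le_rfl] at this)
  have h3 : Real.cosh 1 ≤ 2 := by
    rw [Real.cosh_eq]
    have := Real.exp_one_lt_d9
    have : Real.exp (-1) ≤ 1 := Real.exp_le_one_iff.2 (by norm_num)
    linarith
  simp only [intervalIntegral.integral_const, smul_eq_mul] at h1 h2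
  linarith

theorem warp_high : 1.2 ≤ ∫ r in (0:ℝ)..1, warpDer 100 (1/10) r := by
  rw [← intervalIntegral.integral_add_adjacent_intervals (warp_ii _ _ 0 (11/100)) (warp_ii _ _ _ 1)]
  have h1 := intervalIntegral.integral_mono_on (a := 0) (b := 11/100) (by norm_num)
    (intervalIntegrable_const (c := (1/3:ℝ))) (warp_ii 100 (1/10) 0 (11/100))
    (fun x hx => warpDer_ge _ _ _)
  have h2 := intervalIntegral.integral_mono_on (a := 11/100) (b := 1) (by norm_num)
    (intervalIntegrable_const (c := (1.4:ℝ))) (warp_ii 100 (1/10) (11/100) 1)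
    (fun x hx => by
      rw [warpDer_right (by linarith [hx.1])]
      exact cosh_warpArg_ge x)
  simp only [intervalIntegral.integral_const, smul_eq_mul] at h1 h2
  norm_num at h1 h2 ⊢
  linarith

theorem sinh_one_bounds : 1 < Real.sinh 1 ∧ Real.sinh 1 < 1.2 := by
  refine ⟨Real.self_lt_sinh_iff.2 one_pos, ?_⟩
  rw [Real.sinh_eq, Real.exp_neg]
  have h := Real.exp_one_lt_d9
  have : (0.36:ℝ) ≤ (Real.exp 1)⁻¹ := by
    rw [le_inv_comm₀ (by norm_num) (Real.exp_pos _)]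
    norm_num at h ⊢
    linarith
  norm_num at *
  linarith

/-- There is a suitable monotone derivative. -/
theorem exists_warp_deriv : ∃ g : ℝ → ℝ, ContDiff ℝ (⊤ : ℕ∞) g ∧ Monotone g ∧
    (∀ r ≤ 1/10, g r = 1/3) ∧ (∀ r, 1 ≤ r → g r = Real.cosh r) ∧ (∀ r, 1/3 ≤ g r) ∧
    ∫ r in (0:ℝ)..1, g r = Real.sinh 1 := by
  obtain ⟨s1, s2⟩ := sinh_one_bounds
  have l := warp_low
  have u := warp_high
  obtain ⟨t, t0, t1, ht⟩ : ∃ t : ℝ, 0 ≤ t ∧ t ≤ 1 ∧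
      (1 - t) * (∫ r in (0:ℝ)..1, warpDer 10 (9/10) r)
        + t * (∫ r in (0:ℝ)..1, warpDer 100 (1/10) r) = Real.sinh 1 := by
    generalize (∫ r in (0:ℝ)..1, warpDer 10 (9/10) r) = A at *
    generalize (∫ r in (0:ℝ)..1, warpDer 100 (1/10) r) = B at *
    have hd : 0 < B - A := by linarith
    refine ⟨(Real.sinh 1 - A) / (B - A), div_nonneg (by linarith) hd.le,
      (div_le_one hd).2 (by linarith), ?_⟩
    field_simp
    ring
  refine ⟨fun r => (1 - t) * warpDer 10 (9/10) r + t * warpDer 100 (1/10) r, ?_, ?_, ?_, ?_, ?_, ?_⟩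
  · exact (contDiff_const.mul (warpDer_contDiff _ _)).add (contDiff_const.mul (warpDer_contDiff _ _))
  · intro x y hxy
    have h1 := warpDer_mono (c := 10) (by norm_num) (9/10) hxy
    have h2 := warpDer_mono (c := 100) (by norm_num) (1/10) hxy
    exact add_le_add (mul_le_mul_of_nonneg_left h1 (by linarith)) (mul_le_mul_of_nonneg_left h2 t0)
  · intro r hr
    simp only
    rw [warpDer_left (by norm_num) (by linarith), warpDer_left (by norm_num) hr]
    ring
  · intro r hr
    simp only
    rw [warpDer_right (by linarith), warpDer_right (by linarith), warpArg_of_one_le hr]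
    ring
  · intro r
    have h1 := mul_le_mul_of_nonneg_left (warpDer_ge 10 (9/10) r) (show 0 ≤ 1 - t by linarith)
    have h2 := mul_le_mul_of_nonneg_left (warpDer_ge 100 (1/10) r) t0
    simp only
    linarith
  · rw [intervalIntegral.integral_add ((warp_ii _ _ _ _).const_mul _) ((warp_ii _ _ _ _).const_mul _),
      intervalIntegral.integral_const_mul, intervalIntegral.integral_const_mul, ht]

/-- Existence of the warping function `f`: smooth, equal to `r/3` near `0`,
equal to `sinh r` for `r ≥ 1`, with `f' > 0` and `f'' ≥ 0` on `[0, ∞)`.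
In particular `f 0 = 0`. -/
theorem exists_warping_function :
    ∃ f : ℝ → ℝ, ContDiff ℝ (⊤ : ℕ∞) f ∧
      (∀ r ∈ Set.Icc (0:ℝ) (1/10), f r = r / 3) ∧
      (∀ r : ℝ, 1 ≤ r → f r = Real.sinh r) ∧
      (∀ r : ℝ, 0 ≤ r → 0 < deriv f r) ∧
      (∀ r : ℝ, 0 ≤ r → 0 ≤ deriv (deriv f) r) ∧
      f 0 = 0 := by
  obtain ⟨g, hg, hm, hl, hr, hp, hi⟩ := exists_warp_deriv
  have hd : ∀ x, HasDerivAt (fun r => ∫ s in (0:ℝ)..r, g s) (g x) x := fun x =>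
    hg.continuous.integral_hasStrictDerivAt 0 x |>.hasDerivAt
  have hd' : deriv (fun r => ∫ s in (0:ℝ)..r, g s) = g := funext fun x => (hd x).deriv
  have hii : ∀ a b, IntervalIntegrable g MeasureTheory.volume a b := fun a b =>
    hg.continuous.intervalIntegrable a b
  refine ⟨fun r => ∫ s in (0:ℝ)..r, g s, ?_, ?_, ?_, ?_, ?_, ?_⟩
  · rw [contDiff_infty_iff_deriv, hd']
    exact ⟨fun x => (hd x).differentiableAt, hg⟩
  · intro r h
    have : ∫ s in (0:ℝ)..r, g s = ∫ s in (0:ℝ)..r, (1/3 : ℝ) := by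
      apply intervalIntegral.integral_congr
      intro s hs
      rw [Set.uIcc_of_le h.1] at hs
      exact hl s (hs.2.trans h.2)
    simp only [this, intervalIntegral.integral_const, smul_eq_mul]
    ring
  · intro r h
    have : ∫ s in (1:ℝ)..r, g s = ∫ s in (1:ℝ)..r, Real.cosh s := by
      apply intervalIntegral.integral_congr
      intro s hs
      rw [Set.uIcc_of_le h] at hs
      exact hr s hs.1
    have h2 : ∫ s in (1:ℝ)..r, Real.cosh s = Real.sinh r - Real.sinh 1 :=
      intervalIntegral.integral_eq_sub_of_hasDerivAt (fun x _ => Real.hasDerivAt_sinh x)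
        (Real.continuous_cosh.intervalIntegrable _ _)
    simp only
    rw [← intervalIntegral.integral_add_adjacent_intervals (hii 0 1) (hii 1 r), hi, this, h2]
    ring
  · intro r _
    rw [hd']
    linarith [hp r]
  · intro r _
    rw [hd']
    exact hm.deriv_nonneg
  · simp
end

section
/- Let r : ℝ → ℝ be continuous with r(x) > 0 for all x, and let U = { (x, v) ∈ ℝ × ℝ² : |x| < 1 and ‖v‖ < r(x) } (a subset of ℝ³ = ℝ × ℝ², with ℝ² carrying the Euclidean norm). Then the complement (ℝ × ℝ²) ∖ U, equipped with the subspace topology, is a simply connected topological space. -/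
open Set Topology

/-- Paths inside a simply connected set with the same endpoints are homotopic. -/
theorem homotopic_of_mem_simplyConnected {X : Type*} [TopologicalSpace X] {V : Set X}
    (hV : IsSimplyConnected V) {a b : X} (p q : Path a b) (hp : ∀ t, p t ∈ V)
    (hq : ∀ t, q t ∈ V) : p.Homotopic q := by
  have := hV.simplyConnectedSpace
  have ha : a ∈ V := by simpa using hp 0
  have hb : b ∈ V := by simpa using hp 1
  let p' : Path (⟨a, ha⟩ : V) ⟨b, hb⟩ :=
    { toFun := fun t => ⟨p t, hp t⟩, source' := by simp, target' := by simp }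
  let q' : Path (⟨a, ha⟩ : V) ⟨b, hb⟩ :=
    { toFun := fun t => ⟨q t, hq t⟩, source' := by simp, target' := by simp }
  exact (SimplyConnectedSpace.paths_homotopic p' q').map ⟨Subtype.val, continuous_subtype_val⟩

open Path.Homotopic.Quotient in
/-- The simply connected case of van Kampen's theorem. -/
theorem simplyConnected_of_cover {X ι : Type*} [TopologicalSpace X] (V : ι → Set X)
    (hopen : ∀ i, IsOpen (V i)) (hcov : ∀ x, ∃ i, x ∈ V i)
    (hsc : ∀ i, IsSimplyConnected (V i)) (x₀ : X) (hx₀ : ∀ i, x₀ ∈ V i)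
    (hint : ∀ i j, IsPathConnected (V i ∩ V j)) : SimplyConnectedSpace X := by
  have hc : ∀ z, ∃ c : Path x₀ z, ∀ i, ∀ q : Path x₀ z, (∀ t, q t ∈ V i) → mk q = mk c := by
    intro z
    obtain ⟨j, hj⟩ := hcov z
    have hJ := (hsc j).isPathConnected.joinedIn x₀ (hx₀ j) z hj
    refine ⟨hJ.somePath, fun i q hq => ?_⟩
    have hi : z ∈ V i := by simpa using hq 1
    have hIJ := (hint i j).joinedIn x₀ ⟨hx₀ i, hx₀ j⟩ z ⟨hi, hj⟩
    rw [Path.Homotopic.Quotient.eq]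
    exact (homotopic_of_mem_simplyConnected (hsc i) q hIJ.somePath hq
      (fun t => (hIJ.somePath_mem t).1)).trans
      (homotopic_of_mem_simplyConnected (hsc j) hIJ.somePath hJ.somePath
      (fun t => (hIJ.somePath_mem t).2) hJ.somePath_mem)
  choose c hc using hc
  have hsmall : ∀ (i : ι) (a b : X) (p : Path a b), (∀ t, p t ∈ V i) →
      (mk (c a)).trans (mk p) = mk (c b) := by
    intro i a b p hp
    have ha : a ∈ V i := by simpa using hp 0
    have hJ := (hsc i).isPathConnected.joinedIn x₀ (hx₀ i) a ha
    rw [← hc a i hJ.somePath hJ.somePath_mem, ← mk_trans]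
    apply hc b i
    intro t
    have : (hJ.somePath.trans p) t ∈ range (hJ.somePath.trans p) := ⟨t, rfl⟩
    rw [Path.trans_range] at this
    rcases this with ⟨s, hs⟩ | ⟨s, hs⟩
    · rw [← hs]; exact hJ.somePath_mem s
    · rw [← hs]; exact hp s
  have hall : ∀ (a b : X) (p : Path a b), (mk (c a)).trans (mk p) = mk (c b) := by
    intro a b γ
    obtain ⟨t, ht0, htm, ⟨n, hn⟩, ht⟩ := exists_monotone_Icc_subset_open_cover_unitInterval
      (c := fun i => γ ⁻¹' (V i)) (fun i => (hopen i).preimage γ.continuous)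
      (fun s _ => by
        obtain ⟨i, hi⟩ := hcov (γ s)
        exact mem_iUnion.2 ⟨i, hi⟩)
    have key : ∀ m, (mk (c (γ (t 0)))).trans (mk (γ.subpath (t 0) (t m))) = mk (c (γ (t m))) := by
      intro m
      induction m with
      | zero =>
        obtain ⟨i, hi⟩ := hcov (γ (t 0))
        exact hsmall i _ _ _ (by simpa using hi)
      | succ m ih =>
        obtain ⟨i, hi⟩ := ht m
        have h1 : mk (γ.subpath (t 0) (t (m+1))) =
            (mk (γ.subpath (t 0) (t m))).trans (mk (γ.subpath (t m) (t (m+1)))) := by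
          rw [← mk_trans, Path.Homotopic.Quotient.eq]
          exact ⟨(Path.Homotopy.subpathTransSubpath γ _ _ _).symm⟩
        rw [h1, ← Path.Homotopic.Quotient.trans_assoc, ih]
        apply hsmall i
        intro s
        have hs : γ.subpath (t m) (t (m+1)) s ∈ range (γ.subpath (t m) (t (m+1))) := ⟨s, rfl⟩
        rw [Path.range_subpath_of_le _ _ _ (htm (Nat.le_succ m))] at hs
        obtain ⟨u, hu, hu'⟩ := hs
        rw [← hu']
        exact hi hu
    have k1 := key n
    rw [ht0, hn n le_rfl, Path.subpath_zero_one] at k1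
    have : ∀ a' b' (ha : a' = a) (hb : b' = b),
        (mk (c a')).trans (mk (γ.cast ha hb)) = mk (c b') →
        (mk (c a)).trans (mk γ) = mk (c b) := by
      rintro _ _ rfl rfl h
      exact h
    exact this _ _ _ _ k1
  rw [simply_connected_iff_paths_homotopic']
  refine ⟨⟨⟨x₀⟩, fun x y => ⟨(c x).symm.trans (c y)⟩⟩, fun {x y} p q => ?_⟩
  rw [← Path.Homotopic.Quotient.eq]
  have h := (hall x y p).trans (hall x y q).symm
  have h2 := congrArg (fun z => (symm (mk (c x))).trans z) h
  simpa [← Path.Homotopic.Quotient.trans_assoc] using h2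

abbrev E2 := EuclideanSpace ℝ (Fin 2)

/-- The half pieces are contractible. -/
theorem half_simplyConnected (σ : ℝ) (hσ : σ * σ = 1) :
    IsSimplyConnected {p : ℝ × E2 | -1 < σ * p.1 ∧ (1 ≤ σ * p.1 ∨ 1 ≤ ‖p.2‖)} := by
  set W := {p : ℝ × E2 | -1 < σ * p.1 ∧ (1 ≤ σ * p.1 ∨ 1 ≤ ‖p.2‖)} with hW
  have key : ∀ (x s : ℝ), σ * (x + s * σ) = σ * x + s := by
    intro x s; linear_combination s * hσ
  let f : C(W, W) := ⟨fun p => ⟨(p.1.1 + 2 * σ, p.1.2), by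
    have h := p.2.1
    have := key p.1.1 2
    exact ⟨by simp only; linarith, Or.inl (by simp only; linarith)⟩⟩, by fun_prop⟩
  let w₀ : W := ⟨(3 * σ, 0), by
    have := key 0 3
    simp only [zero_add, mul_zero] at this
    exact ⟨by simp only; linarith, Or.inl (by simp only; linarith)⟩⟩
  let F : ContinuousMap.Homotopy (ContinuousMap.id W) f :=
    { toFun := fun q => ⟨(q.2.1.1 + (2 * (q.1 : ℝ)) * σ, q.2.1.2), by
        have h := q.2.2
        have h0 := q.1.2.1
        have := key q.2.1.1 (2 * q.1)
        refine ⟨by have := h.1; simp only; linarith, ?_⟩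
        rcases h.2 with h2 | h2
        · left; simp only; linarith
        · right; exact h2⟩
      continuous_toFun := by fun_prop
      map_zero_left := by intro x; simp
      map_one_left := by intro x; simp [f] }
  let G : ContinuousMap.Homotopy f (ContinuousMap.const W w₀) :=
    { toFun := fun q => ⟨((1 - (q.1 : ℝ)) * (q.2.1.1 + 2 * σ) + q.1 * (3 * σ),
          (1 - (q.1 : ℝ)) • q.2.1.2), by
        have h := q.2.2.1
        have h0 := q.1.2.1
        have h1 := q.1.2.2
        have e : σ * ((1 - (q.1 : ℝ)) * (q.2.1.1 + 2 * σ) + q.1 * (3 * σ)) =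
          (1 - q.1) * (σ * q.2.1.1 + 2) + q.1 * 3 := by
          linear_combination ((1 - (q.1:ℝ)) * 2 + q.1 * 3) * hσ
        have : 1 ≤ (1 - (q.1 : ℝ)) * (σ * q.2.1.1 + 2) + q.1 * 3 := by nlinarith
        exact ⟨by simp only; linarith, Or.inl (by simp only; linarith)⟩⟩
      continuous_toFun := by fun_prop
      map_zero_left := by intro x; simp [f]
      map_one_left := by intro x; simp [w₀] }
  have : ContractibleSpace W :=
    (contractible_iff_id_nullhomotopic W).2 ⟨w₀, ⟨F.trans G⟩⟩
  exact SimplyConnectedSpace.ofContractible W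

theorem middle_pathConnected :
    IsPathConnected {p : ℝ × E2 | |p.1| < 1 ∧ 1 ≤ ‖p.2‖} := by
  have hs : IsPathConnected (Metric.sphere (0 : E2) 1) :=
    isPathConnected_sphere (by rw [← Module.finrank_eq_rank]; simp) 0 zero_le_one
  have h1 : IsPathConnected (Ioo (-1 : ℝ) 1) :=
    (convex_Ioo _ _).isPathConnected ⟨0, by simp⟩
  have h2 : IsPathConnected (Ici (1 : ℝ)) := (convex_Ici _).isPathConnected ⟨1, by simp⟩
  have h := (h1.prod (h2.prod hs)).image
    (f := fun q : ℝ × ℝ × E2 => (q.1, q.2.1 • q.2.2)) (by fun_prop)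
  convert h using 1
  ext ⟨x, v⟩
  simp only [mem_ofPred_eq, mem_image, mem_prod, mem_Ioo, mem_Ici, mem_sphere_zero_iff_norm,
    Prod.exists, Prod.mk.injEq, abs_lt]
  constructor
  · rintro ⟨hx, hv⟩
    have : ‖v‖ ≠ 0 := by positivity
    refine ⟨x, ‖v‖, ‖v‖⁻¹ • v, ⟨hx, hv, ?_⟩, rfl, ?_⟩
    · rw [norm_smul]; simp [this]
    · rw [smul_smul, mul_inv_cancel₀ this, one_smul]
  · rintro ⟨x, s, u, ⟨hx, hs, hu⟩, rfl, rfl⟩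
    refine ⟨hx, ?_⟩
    rw [norm_smul, hu, mul_one]
    exact hs.trans (le_abs_self s)

theorem model_simplyConnected :
    IsSimplyConnected {p : ℝ × E2 | 1 ≤ |p.1| ∨ 1 ≤ ‖p.2‖} := by
  set C := {p : ℝ × E2 | 1 ≤ |p.1| ∨ 1 ≤ ‖p.2‖} with hC
  let s : Bool → ℝ := fun b => cond b 1 (-1)
  let V : Bool → Set C := fun b => {p | -1 < s b * p.1.1}
  have hsc : ∀ b, IsSimplyConnected (V b) := by
    intro b
    rw [← IsEmbedding.subtypeVal.isSimplyConnected_image]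
    convert half_simplyConnected (s b) (by cases b <;> simp [s]) using 1
    ext p
    simp only [mem_image, mem_ofPred_eq, V, Subtype.exists, exists_and_left, exists_prop,
      exists_eq_right_right, hC, le_abs]
    cases b <;> simp only [s, cond_true, cond_false] <;> grind
  have hmid : IsPathConnected (V true ∩ V false) := by
    rw [IsInducing.subtypeVal.isPathConnected_iff]
    convert middle_pathConnected using 1
    ext p
    simp only [mem_image, mem_ofPred_eq, V, Subtype.exists, mem_inter_iff, exists_and_left,
      exists_prop, exists_eq_right_right, hC, le_abs, s, cond_true, cond_false, abs_lt]
    grind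
  obtain ⟨x₀, hx₀⟩ := hmid.nonempty
  refine simplyConnected_of_cover V ?_ ?_ hsc x₀ ?_ ?_
  · intro b
    exact isOpen_lt continuous_const (by fun_prop)
  · intro x
    by_cases h : -1 < x.1.1
    · exact ⟨true, by simpa [V, s] using h⟩
    · exact ⟨false, by simp only [V, s, cond_false, mem_ofPred_eq]; linarith⟩
  · intro b
    cases b
    · exact hx₀.2
    · exact hx₀.1
  · intro i j
    cases i <;> cases j
    · rw [inter_self]; exact (hsc _).isPathConnected
    · rw [inter_comm]; exact hmid
    · exact hmid
    · rw [inter_self]; exact (hsc _).isPathConnected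

/-- The complement of the region `U = {(x, v) : |x| < 1, ‖v‖ < r(x)}` in
`ℝ × ℝ²` is simply connected. -/
theorem complement_simply_connected
    (r : ℝ → ℝ) (hr_cont : Continuous r) (hr_pos : ∀ x, 0 < r x)
    (U : Set (ℝ × EuclideanSpace ℝ (Fin 2)))
    (hU : U = {p : ℝ × EuclideanSpace ℝ (Fin 2) | |p.1| < 1 ∧ ‖p.2‖ < r p.1}) :
    SimplyConnectedSpace ↥Uᶜ := by
  have hne : ∀ x, r x ≠ 0 := fun x => (hr_pos x).ne'
  have hinv : Continuous fun x => (r x)⁻¹ := hr_cont.inv₀ hne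
  let e : (ℝ × E2) ≃ₜ (ℝ × E2) :=
    { toFun := fun p => (p.1, (r p.1)⁻¹ • p.2)
      invFun := fun p => (p.1, r p.1 • p.2)
      left_inv := fun p => by simp [smul_smul, hne]
      right_inv := fun p => by simp [smul_smul, hne]
      continuous_toFun := continuous_fst.prodMk ((hinv.comp continuous_fst).smul continuous_snd)
      continuous_invFun := by fun_prop }
  have h := (e.isSimplyConnected_preimage).2 model_simplyConnected
  have hEq : Uᶜ = e ⁻¹' {p : ℝ × E2 | 1 ≤ |p.1| ∨ 1 ≤ ‖p.2‖} := by
    subst hU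
    ext ⟨x, v⟩
    have hp := hr_pos x
    have : 1 ≤ ‖(r x)⁻¹ • v‖ ↔ r x ≤ ‖v‖ := by
      rw [norm_smul, norm_inv, Real.norm_of_nonneg hp.le, inv_mul_eq_div, le_div_iff₀ hp, one_mul]
    simp only [mem_compl_iff, mem_ofPred_eq, mem_preimage, e, Homeomorph.homeomorph_mk_coe,
      Equiv.coe_fn_mk, this, not_and_or, not_lt]
  rw [hEq]
  exact h
end
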